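/- Let n ≥ 2 be an integer and let c > 1 be a real number. If the unique positive real root α of f(x) = x^n − x − c is an integer, then α = ⌊c^(1/n)⌋ + 1. -/

import Mathlib

theorem aux_pow_bound (b : ℝ) (hb : 0 ≤ b) (n : ℕ) (hn : 2 ≤ n) :
    b ^ n + b + 1 ≤ (b + 1) ^ n := by
  induction n, hn using Nat.le_induction with
  | base => nlinarith
  | succ k hk ih =>
    have h1 : 0 ≤ b ^ k := pow_nonneg hb k
    rw [pow_succ, pow_succ]
    nlinarith [mul_le_mul_of_nonneg_right ih (by linarith : (0 : ℝ) ≤ b + 1), mul_nonneg hb hb]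

/-- For `f(x) = x^n - x - c` with integer `n ≥ 2` and real `c > 1`, if the
unique positive real root `α` is an integer, then `α = ⌊c^(1/n)⌋ + 1`. -/
theorem integer_root_formula (n : ℕ) (hn : 2 ≤ n) (c : ℝ) (hc : 1 < c) (α : ℝ)
    (hα_pos : 0 < α) (hα_root : α ^ n - α - c = 0)
    (hα_unique : ∀ β : ℝ, 0 < β → β ^ n - β - c = 0 → β = α)
    (hα_int : ∃ m : ℤ, (m : ℝ) = α) :
    α = ⌊c ^ ((1 : ℝ) / n)⌋ + 1 := by
  obtain ⟨m, rfl⟩ := hα_int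
  have hm : 0 < m := by exact_mod_cast hα_pos
  have hm1 : (1 : ℝ) ≤ m := by exact_mod_cast hm
  have hn0 : n ≠ 0 := by omega
  have hr0 : 0 ≤ c ^ ((1 : ℝ) / n) := Real.rpow_nonneg (by linarith) _
  have hr : (c ^ ((1 : ℝ) / n)) ^ n = c := by
    rw [one_div]
    exact Real.rpow_inv_natCast_pow (by linarith) hn0
  have hb := aux_pow_bound ((m : ℝ) - 1) (by linarith) n hn
  rw [sub_add_cancel] at hb
  have hfl : ⌊c ^ ((1 : ℝ) / n)⌋ = m - 1 := by
    rw [Int.floor_eq_iff]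
    push_cast
    constructor
    · apply le_of_pow_le_pow_left₀ hn0 hr0
      rw [hr]; linarith
    · rw [sub_add_cancel]
      apply lt_of_pow_lt_pow_left₀ n hα_pos.le
      rw [hr]; linarith
  rw [hfl]; push_cast; ring
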